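/- Let G be a one-sided complete-observation turn-based stochastic game satisfying interaction separation with uniform-n-ary probabilistic states (as in the context), let f : A₁ → ZMod n and g : A₂ → ZMod n be surjective, and let (G', φ') be the derandomized game and objective obtained from (G, φ). Then for every measurable objective φ ⊆ S^ω and every state s ∈ S: player 1 has an observation-based almost-sure winning strategy for φ from s in G if and only if player 1 has an observation-based almost-sure winning strategy for φ' from s in G'; and player 1 has an observation-based positive winning strategy for φ from s in G if and only if player 1 has an observation-based positive winning strategy for φ' from s in G'. -/

import Mathlib

open MeasureTheory
open scoped ENNReal

namespace Stmt6

/-- Type of a state: player-1 state, player-2 state, or probabilistic state. -/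
inductive Turn : Type
  | p1 : Turn
  | p2 : Turn
  | prob : Turn
deriving DecidableEq

variable {S A₁ A₂ O : Type}

/-- The cylinder set of infinite plays extending the finite prefix `l`. -/
def Cyl {α : Type} (l : List α) : Set (ℕ → α) := {ρ | ∀ i : Fin l.length, ρ i.1 = l.get i}

/-- Probability of observing the successive states `rest` after the history `hist ++ [cur]`,
given the one-step transition probability `step`. -/
noncomputable def listProb {α : Type} (step : List α → α → α → ℝ≥0∞) :
    List α → α → List α → ℝ≥0∞
  | _, _, [] => 1
  | hist, cur, s' :: rest => step hist cur s' * listProb step (hist ++ [cur]) s' rest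

/-- One-step transition probability of the turn-based game `G`: at player-1 states the
action of player 1 (drawn from `σ`) determines the successor via `δ₁`, at player-2 states
the action of player 2 (drawn from `π`) determines it via `δ₂`, and at probabilistic
states with successor tuple `succ cur : ZMod n → S` each successor is reached with
probability `#{k | succ cur k = next}/n` (independently of the actions). -/
noncomputable def stepG [DecidableEq S] [Fintype A₁] [Fintype A₂] (n : ℕ) [NeZero n]
    (turn : S → Turn) (δ₁ : S → A₁ → S) (δ₂ : S → A₂ → S) (succ : S → ZMod n → S)
    (σ : List S → PMF A₁) (π : List S → PMF A₂)
    (hist : List S) (cur next : S) : ℝ≥0∞ :=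
  match turn cur with
  | Turn.p1 => ∑' a, σ (hist ++ [cur]) a * (if δ₁ cur a = next then 1 else 0)
  | Turn.p2 => ∑' b, π (hist ++ [cur]) b * (if δ₂ cur b = next then 1 else 0)
  | Turn.prob =>
      ((Finset.univ.filter fun k : ZMod n => succ cur k = next).card : ℝ≥0∞) / (n : ℝ≥0∞)

/-- `Pr` is the family of Ionescu–Tulcea play measures of the game with one-step
transition probabilities `step σ π`. -/
def IsPlayMeasure {α : Type} [MeasurableSpace α]
    (step : (List α → PMF A₁) → (List α → PMF A₂) → List α → α → α → ℝ≥0∞)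
    (Pr : α → (List α → PMF A₁) → (List α → PMF A₂) → Measure (ℕ → α)) : Prop :=
  (∀ s σ π, IsProbabilityMeasure (Pr s σ π)) ∧
    ∀ s σ π (l : List α), Pr s σ π (Cyl (s :: l)) = listProb (step σ π) [] s l

/-- An observation-based strategy only depends on the observation sequence. -/
def ObsBased {α A O : Type} (obs : α → O) (σ : List α → PMF A) : Prop :=
  ∀ h h' : List α, h.map obs = h'.map obs → σ h = σ h'

/-- State space of the derandomized game `G'`. -/
abbrev S' (S : Type) (n : ℕ) : Type := S ⊕ S × ZMod n

/-- Turn function of `G'`: probabilistic states of `G` become player-2 states, and the new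
states `(s, i)` are player-1 states. -/
def turn' (turn : S → Turn) {n : ℕ} : S' S n → Turn
  | Sum.inl s => match turn s with
    | Turn.prob => Turn.p2
    | t => t
  | Sum.inr _ => Turn.p1

/-- Player-1 transitions of `G'`: unchanged on `S₁`; from `(s, i)` the action `a` leads to
the entry of the successor tuple of `s` at index `i + f a`. -/
def delta₁' (δ₁ : S → A₁ → S) {n : ℕ} (succ : S → ZMod n → S) (f : A₁ → ZMod n) :
    S' S n → A₁ → S' S n
  | Sum.inl s, a => Sum.inl (δ₁ s a)
  | Sum.inr (s, i), a => Sum.inl (succ s (i + f a))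

/-- Player-2 transitions of `G'`: unchanged on `S₂`; from a probabilistic state `s` of `G`
the action `b` leads to `(s, g b)`. -/
def delta₂' [DecidableEq Turn] (turn : S → Turn) (δ₂ : S → A₂ → S) {n : ℕ}
    (g : A₂ → ZMod n) : S' S n → A₂ → S' S n
  | Sum.inl s, b => if turn s = Turn.prob then Sum.inr (s, g b) else Sum.inl (δ₂ s b)
  | Sum.inr (s, i), _ => Sum.inr (s, i)

/-- One-step transition probability of the (deterministic) derandomized game `G'`. -/
noncomputable def stepG' [DecidableEq S] [Fintype A₁] [Fintype A₂] (n : ℕ) [NeZero n]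
    (turn : S → Turn) (δ₁ : S → A₁ → S) (δ₂ : S → A₂ → S) (succ : S → ZMod n → S)
    (f : A₁ → ZMod n) (g : A₂ → ZMod n)
    (σ : List (S' S n) → PMF A₁) (π : List (S' S n) → PMF A₂)
    (hist : List (S' S n)) (cur next : S' S n) : ℝ≥0∞ :=
  match turn' turn cur with
  | Turn.p1 => ∑' a, σ (hist ++ [cur]) a *
      (if delta₁' δ₁ succ f cur a = next then 1 else 0)
  | Turn.p2 => ∑' b, π (hist ++ [cur]) b *
      (if delta₂' turn δ₂ g cur b = next then 1 else 0)
  | Turn.prob => 0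

/-- Projection of `G'`-states to `G`-states. -/
def unbar {n : ℕ} : S' S n → S
  | Sum.inl s => s
  | Sum.inr (s, _) => s

/-- Observation map of `G'`: `(s, i)` is observed like `s`. -/
def obs' (obs₁ : S → O) {n : ℕ} : S' S n → O := fun s => obs₁ (unbar s)

/-- The derandomized objective `φ'`: the subsequence of states in `S` (i.e. not in
`S_P × ZMod n`) is infinite and belongs to `φ`. -/
def phi' {n : ℕ} (φ : Set (ℕ → S)) : Set (ℕ → S' S n) :=
  {ρ | {m | (ρ m).isLeft = true}.Infinite ∧
    (fun k => unbar (ρ (Nat.nth (fun m => (ρ m).isLeft = true) k))) ∈ φ}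

/-! ### Generic facts on play measures -/

set_option linter.unusedSectionVars false

/-- The history of length `m` of a play. -/
def hst {α : Type} (m : ℕ) (ρ : ℕ → α) : List α := (List.range m).map ρ

lemma hst_succ {α : Type} (m : ℕ) (ρ : ℕ → α) : hst (m+1) ρ = hst m ρ ++ [ρ m] := by
  simp [hst, List.range_succ]

lemma hst_length {α : Type} (m : ℕ) (ρ : ℕ → α) : (hst m ρ).length = m := by simp [hst]

lemma hst_congr {α : Type} {m : ℕ} {ρ ρ' : ℕ → α} (h : ∀ i < m, ρ i = ρ' i) :
    hst m ρ = hst m ρ' := by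
  unfold hst
  apply List.map_congr_left
  intro i hi
  exact h i (List.mem_range.1 hi)

lemma hst_eq_iff {α : Type} {m : ℕ} {ρ ρ' : ℕ → α} :
    hst m ρ = hst m ρ' ↔ (∀ i < m, ρ i = ρ' i) := by
  constructor
  · intro h i hi
    unfold hst at h
    exact List.map_inj_left.1 h i (List.mem_range.2 hi)
  · exact hst_congr

lemma hst_getD {α : Type} {m i : ℕ} (ρ : ℕ → α) (d : α) (h : i < m) :
    (hst m ρ).getD i d = ρ i := by
  simp [hst, List.getD_eq_getElem?_getD, h]

lemma hst_eq_cyl {α : Type} (l : List α) : {ρ : ℕ → α | hst l.length ρ = l} = Cyl l := by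
  ext ρ
  simp only [Cyl, Set.mem_ofPred_eq]
  constructor
  · intro h i
    have := hst_getD ρ (l.get i) i.2
    rw [h] at this
    rw [← this]
    simp
  · intro h
    apply List.ext_getElem
    · simp [hst]
    · intro i h1 h2
      have := h ⟨i, h2⟩
      simp [hst, this]

section generic

variable {α : Type} [MeasurableSpace α] [DiscreteMeasurableSpace α] [Finite α]

lemma meas_dep {β : Type} [MeasurableSpace β] (m : ℕ) (Ψ : (ℕ → α) → β)
    (h : ∀ ρ ρ', (∀ i < m + 1, ρ i = ρ' i) → Ψ ρ = Ψ ρ') : Measurable Ψ := by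
  let ext : (Fin (m+1) → α) → (ℕ → α) := fun v i => if h : i < m+1 then v ⟨i, h⟩ else v 0
  let res : (ℕ → α) → (Fin (m+1) → α) := fun ρ i => ρ i
  have : Ψ = (Ψ ∘ ext) ∘ res := by
    funext ρ
    apply h
    intro i hi
    simp only [ext, res, dif_pos hi]
  rw [this]
  have hres : Measurable res := by
    apply measurable_pi_lambda
    intro i
    exact measurable_pi_apply _
  exact (measurable_of_countable _).comp hres

lemma measSet_dep (m : ℕ) (p : (ℕ → α) → Prop)
    (h : ∀ ρ ρ', (∀ i < m + 1, ρ i = ρ' i) → (p ρ ↔ p ρ')) : MeasurableSet {ρ | p ρ} := by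
  have : Measurable p := meas_dep m p (fun ρ ρ' hh => propext (h ρ ρ' hh))
  exact measurableSet_setOfPred.2 this

lemma measSet_hst (m : ℕ) (w : List α) : MeasurableSet {ρ : ℕ → α | hst m ρ = w} := by
  apply measSet_dep m
  intro ρ ρ' h
  rw [hst_congr (fun i hi => h i (by omega))]

lemma lintegral_hst (P : Measure (ℕ → α)) (m : ℕ) (Ψ : (ℕ → α) → ℝ≥0∞) :
    ∫⁻ ρ, Ψ ρ ∂P = ∑' w : List α, ∫⁻ ρ in {ρ | hst m ρ = w}, Ψ ρ ∂P := by
  rw [← lintegral_iUnion (fun w => measSet_hst m w)]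
  · have : (⋃ w : List α, {ρ : ℕ → α | hst m ρ = w}) = Set.univ := by
      ext ρ; simp
    rw [this, Measure.restrict_univ]
  · intro w w' hne
    rw [Function.onFun, Set.disjoint_left]
    intro ρ h h'
    exact hne (h.symm.trans h')

/-- `P` is the play measure from `s`. -/
def IsPM (step : List α → α → α → ℝ≥0∞) (s : α) (P : Measure (ℕ → α)) : Prop :=
  IsProbabilityMeasure P ∧ ∀ l, P (Cyl (s :: l)) = listProb step [] s l

lemma listProb_snoc (step : List α → α → α → ℝ≥0∞) (l : List α) (y : α) :
    ∀ (h : List α) (s : α) (u : List α) (c : α), s :: l = u ++ [c] →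
      listProb step h s (l ++ [y]) = listProb step h s l * step (h ++ u) c y := by
  induction l with
  | nil =>
    intro h s u c hu
    have : u = [] ∧ s = c := by
      cases u with
      | nil => simpa using hu
      | cons a u => simp at hu
    obtain ⟨rfl, rfl⟩ := this
    simp [listProb]
  | cons a l ih =>
    intro h s u c hu
    cases u with
    | nil => simp at hu
    | cons b u =>
      simp only [List.cons_append, List.cons.injEq] at hu
      obtain ⟨rfl, hu⟩ := hu
      simp only [List.cons_append, listProb]
      rw [ih (h ++ [s]) a u c hu, mul_assoc]
      simp

lemma IsPM.zero {step : List α → α → α → ℝ≥0∞} {s : α} {P : Measure (ℕ → α)}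
    (hP : IsPM step s P) : ∀ᵐ ρ ∂P, ρ 0 = s := by
  have := hP.1
  have h1 : P {ρ | ρ 0 = s} = 1 := by
    have := hP.2 []
    rw [← hst_eq_cyl] at this
    simpa [hst, listProb] using this
  have hm : MeasurableSet {ρ : ℕ → α | ρ 0 = s} := by
    apply measSet_dep 0
    intro ρ ρ' h
    rw [h 0 (by omega)]
  rw [ae_iff]
  exact (prob_compl_eq_zero_iff hm).2 h1

lemma IsPM.next {step : List α → α → α → ℝ≥0∞} {s : α} {P : Measure (ℕ → α)}
    (hP : IsPM step s P) (m : ℕ) (u : List α) (c y : α) :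
    P {ρ | hst (m+1) ρ = u ++ [c] ∧ ρ (m+1) = y} =
      P {ρ | hst (m+1) ρ = u ++ [c]} * step u c y := by
  by_cases hu : u.length = m
  swap
  · have h0 : ∀ ρ : ℕ → α, ¬ (hst (m+1) ρ = u ++ [c]) := by
      intro ρ h
      have := congrArg List.length h
      simp [hst_length] at this
      omega
    simp [h0]
  obtain ⟨a, l, hl⟩ : ∃ a l, u ++ [c] = a :: l := by
    cases u with
    | nil => exact ⟨c, [], rfl⟩
    | cons a u => exact ⟨a, u ++ [c], rfl⟩
  have hlen : l.length = m := by
    have := congrArg List.length hl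
    simp at this; omega
  by_cases ha : a = s
  swap
  · have h0 : P {ρ | hst (m+1) ρ = u ++ [c]} = 0 := by
      apply measure_mono_null _ (ae_iff.1 hP.zero)
      intro ρ hρ
      simp only [Set.mem_ofPred_eq] at hρ ⊢
      have := hst_getD (m := m+1) (i := 0) ρ s (by omega)
      rw [hρ, hl] at this
      simp at this
      rw [← this]; exact ha
    rw [h0, zero_mul]
    exact measure_mono_null (fun ρ h => h.1) h0
  subst ha
  have e1 : {ρ : ℕ → α | hst (m+1) ρ = u ++ [c]} = Cyl (a :: l) := by
    rw [← hst_eq_cyl, hl]; simp [hlen]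
  have e2 : {ρ : ℕ → α | hst (m+1) ρ = u ++ [c] ∧ ρ (m+1) = y} = Cyl (a :: (l ++ [y])) := by
    rw [← hst_eq_cyl, hl]
    ext ρ
    simp only [Set.mem_ofPred_eq, List.length_cons, List.length_append, List.length_nil, hlen]
    rw [hst_succ (m+1), ← List.cons_append]
    constructor
    · rintro ⟨h1, h2⟩; rw [h1, h2]
    · intro h
      have := List.append_inj' h rfl
      simpa using this
  rw [e1, e2, hP.2, hP.2, listProb_snoc step l y [] a u c hl.symm]
  simp

/-- The Markov property. -/
lemma IsPM.markov [DecidableEq α] {step : List α → α → α → ℝ≥0∞} {s : α} {P : Measure (ℕ → α)}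
    (hP : IsPM step s P) (m : ℕ) (G : List α → α → ℝ≥0∞) (y : α) :
    ∫⁻ ρ, G (hst m ρ) (ρ m) * (if ρ (m+1) = y then 1 else 0) ∂P =
      ∫⁻ ρ, G (hst m ρ) (ρ m) * step (hst m ρ) (ρ m) y ∂P := by
  rw [lintegral_hst P (m+1), lintegral_hst P (m+1)]
  congr 1
  funext w
  rcases List.eq_nil_or_concat w with rfl | ⟨u, c, rfl⟩
  · have : {ρ : ℕ → α | hst (m+1) ρ = []} = ∅ := by
      ext ρ
      simp [hst_succ]
    rw [this]; simp
  simp only [List.concat_eq_append]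
  have hsp : ∀ ρ : ℕ → α, hst (m+1) ρ = u ++ [c] → hst m ρ = u ∧ ρ m = c := by
    intro ρ h
    rw [hst_succ] at h
    simpa using List.append_inj' h rfl
  have hm := measSet_hst (m+1) (u ++ [c])
  have e1 : ∫⁻ ρ in {ρ | hst (m+1) ρ = u ++ [c]},
      G (hst m ρ) (ρ m) * (if ρ (m+1) = y then 1 else 0) ∂P =
      ∫⁻ ρ in {ρ | hst (m+1) ρ = u ++ [c]}, G u c * (if ρ (m+1) = y then 1 else 0) ∂P := by
    apply setLIntegral_congr_fun hm
    intro ρ hρ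
    obtain ⟨h1, h2⟩ := hsp ρ hρ
    simp only [h1, h2]
  have e2 : ∫⁻ ρ in {ρ | hst (m+1) ρ = u ++ [c]},
      G (hst m ρ) (ρ m) * step (hst m ρ) (ρ m) y ∂P =
      ∫⁻ ρ in {ρ | hst (m+1) ρ = u ++ [c]}, G u c * step u c y ∂P := by
    apply setLIntegral_congr_fun hm
    intro ρ hρ
    obtain ⟨h1, h2⟩ := hsp ρ hρ
    simp only [h1, h2]
  have hmy : MeasurableSet {ρ : ℕ → α | ρ (m+1) = y} := by
    apply measSet_dep (m+1)
    intro ρ ρ' h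
    rw [h (m+1) (by omega)]
  have e3 : (fun ρ : ℕ → α => (if ρ (m+1) = y then (1:ℝ≥0∞) else 0)) =
      Set.indicator {ρ : ℕ → α | ρ (m+1) = y} 1 := by
    funext ρ
    simp [Set.indicator]
  rw [e1, e2, lintegral_const_mul, e3, lintegral_indicator_one hmy, Measure.restrict_apply hmy,
    setLIntegral_const, mul_assoc]
  · rw [Set.inter_comm]
    have := hP.next m u c y
    rw [mul_comm (step u c y), ← this]
    rfl
  · rw [e3]; exact measurable_one.indicator hmy

lemma IsPM.of_next {step : List α → α → α → ℝ≥0∞} {s : α} {P : Measure (ℕ → α)}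
    (hp : IsProbabilityMeasure P) (h0 : ∀ᵐ ρ ∂P, ρ 0 = s)
    (h : ∀ (m : ℕ) (u : List α) (c y : α),
      P {ρ | hst m ρ = u ∧ ρ m = c ∧ ρ (m+1) = y} =
      P {ρ | hst m ρ = u ∧ ρ m = c} * step u c y) : IsPM step s P := by
  refine ⟨hp, ?_⟩
  intro l
  induction l using List.reverseRecOn with
  | nil =>
    have : P (Cyl [s]) = P Set.univ := by
      apply measure_congr
      rw [← hst_eq_cyl]
      filter_upwards [h0] with ρ hρ
      apply propext
      show hst 1 ρ = [s] ↔ True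
      simp [hst, hρ]
    rw [this]; simp [listProb]
  | append_singleton l y ih =>
    obtain ⟨u, c, hl⟩ : ∃ u c, s :: l = u ++ [c] := by
      rcases List.eq_nil_or_concat (s :: l) with h | ⟨u, c, h⟩
      · simp at h
      · exact ⟨u, c, by simpa using h⟩
    rw [listProb_snoc step l y [] s u c hl, ← ih, ← List.cons_append, hl]
    have e1 : Cyl (u ++ [c]) = {ρ : ℕ → α | hst u.length ρ = u ∧ ρ u.length = c} := by
      rw [← hst_eq_cyl]
      ext ρ
      simp only [Set.mem_ofPred_eq, List.length_append, List.length_cons, List.length_nil,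
        zero_add, hst_succ]
      constructor
      · intro h
        simpa using List.append_inj' h rfl
      · rintro ⟨h1, h2⟩; rw [h1, h2]
    have e2 : Cyl (u ++ [c] ++ [y]) =
        {ρ : ℕ → α | hst u.length ρ = u ∧ ρ u.length = c ∧ ρ (u.length + 1) = y} := by
      rw [← hst_eq_cyl]
      ext ρ
      simp only [Set.mem_ofPred_eq, List.length_append, List.length_cons, List.length_nil,
        zero_add, hst_succ]
      constructor
      · intro h
        have h1 := List.append_inj' h rfl
        have h2 := List.append_inj' h1.1 rfl
        simp at h1 h2
        exact ⟨h2.1, h2.2, h1.2⟩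
      · rintro ⟨h1, h2, h3⟩; rw [h1, h2, h3]
    rw [e1, e2, h]
    simp

lemma IsPM.unique {step : List α → α → α → ℝ≥0∞} {s : α} {P Q : Measure (ℕ → α)}
    (hP : IsPM step s P) (hQ : IsPM step s Q) : P = Q := by
  have := hP.1
  have := hQ.1
  let C : Set (Set (ℕ → α)) := {A | ∃ (m : ℕ) (B : Set (List α)), A = {ρ | hst m ρ ∈ B}}
  have hCm : ∀ A ∈ C, MeasurableSet A := by
    rintro A ⟨m, B, rfl⟩
    apply measSet_dep m
    intro ρ ρ' h
    rw [hst_congr (fun i hi => h i (by omega))]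
  have hcyl : ∀ (w : List α), P (Cyl w) = Q (Cyl w) := by
    intro w
    cases w with
    | nil =>
      have : Cyl ([] : List α) = Set.univ := by
        rw [← hst_eq_cyl]; ext ρ; simp [hst]
      rw [this]; simp
    | cons a l =>
      by_cases ha : a = s
      · subst ha; rw [hP.2, hQ.2]
      · have : ∀ M : Measure (ℕ → α), (∀ᵐ ρ ∂M, ρ 0 = s) → M (Cyl (a :: l)) = 0 := by
          intro M hR
          apply measure_mono_null _ (ae_iff.1 hR)
          intro ρ hρ
          have := hρ ⟨0, by simp⟩
          simp at this
          simp only [Set.mem_ofPred_eq]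
          rw [this]; exact ha
        rw [this P hP.zero, this Q hQ.zero]
  have hC : ∀ A ∈ C, P A = Q A := by
    rintro A ⟨m, B, rfl⟩
    have e : {ρ : ℕ → α | hst m ρ ∈ B} = ⋃ w : {w : List α // w ∈ B ∧ w.length = m}, Cyl w.1 := by
      ext ρ
      simp only [Set.mem_ofPred_eq, Set.mem_iUnion]
      constructor
      · intro h
        refine ⟨⟨hst m ρ, h, hst_length _ _⟩, ?_⟩
        rw [← hst_eq_cyl]
        simp [hst_length]
      · rintro ⟨⟨w, hw, hl⟩, h⟩
        rw [← hst_eq_cyl] at h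
        simp only [Set.mem_ofPred_eq, hl] at h
        rw [h]; exact hw
    have hd : Pairwise (Function.onFun Disjoint
        fun w : {w : List α // w ∈ B ∧ w.length = m} => Cyl w.1) := by
      intro w w' hne
      rw [Function.onFun, Set.disjoint_left]
      intro ρ h h'
      rw [← hst_eq_cyl] at h h'
      simp only [Set.mem_ofPred_eq, w.2.2, w'.2.2] at h h'
      exact hne (Subtype.ext (h.symm.trans h'))
    have hm : ∀ w : {w : List α // w ∈ B ∧ w.length = m}, MeasurableSet (Cyl w.1) := by
      intro w
      rw [← hst_eq_cyl]; exact measSet_hst _ _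
    rw [e, measure_iUnion hd hm, measure_iUnion hd hm]
    congr 1
    funext w
    exact hcyl _
  have htake : ∀ (m m' : ℕ) (ρ : ℕ → α), m ≤ m' → (hst m' ρ).take m = hst m ρ := by
    intro m m' ρ h
    simp [hst, ← List.map_take, List.take_range, h]
  have hpi : IsPiSystem C := by
    rintro _ ⟨m, B, rfl⟩ _ ⟨m', B', rfl⟩ -
    refine ⟨max m m', {w | w.take m ∈ B ∧ w.take m' ∈ B'}, ?_⟩
    ext ρ
    simp [htake]
  have hgen : (MeasurableSpace.pi : MeasurableSpace (ℕ → α)) = MeasurableSpace.generateFrom C := by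
    apply le_antisymm
    · unfold MeasurableSpace.pi
      apply iSup_le
      intro i
      rintro A ⟨B, -, rfl⟩
      apply MeasurableSpace.measurableSet_generateFrom
      refine ⟨i+1, {w | ∃ b ∈ B, w.getLast? = some b}, ?_⟩
      ext ρ
      simp [hst_succ]
    · exact MeasurableSpace.generateFrom_le hCm
  exact ext_of_generate_finite C hgen hpi hC (by simp)

end generic

/-! ### The structure of plays of the derandomized game -/

/-- Position in the derandomized play of the `k`-th original state. -/
def ee (c k : ℕ) : ℕ := k + (k + c) / 2

/-- Index of the last original state up to position `m`. -/
def rr (c m : ℕ) : ℕ := (2 * m + 1 - c) / 3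

/-- Deletion of the auxiliary states, position based. -/
def EE {n : ℕ} (c : ℕ) (ρ : ℕ → S' S n) : ℕ → S := fun k => unbar (ρ (ee c k))

lemma ee_succ0 {c k : ℕ} (h : (k + c) % 2 = 0) : ee c (k+1) = ee c k + 1 := by
  unfold ee; omega

lemma ee_succ1 {c k : ℕ} (h : (k + c) % 2 = 1) : ee c (k+1) = ee c k + 1 + 1 := by
  unfold ee; omega

lemma rr_ee {c k : ℕ} (hc : c ≤ 1) : rr c (ee c k) = k := by
  unfold ee rr; omega

lemma ee_zero {c : ℕ} (hc : c ≤ 1) : ee c 0 = 0 := by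
  unfold ee; omega

lemma ee_lt {c j k : ℕ} (h : j < k) : ee c j < ee c k := by
  unfold ee; omega

lemma rr_le {c m k : ℕ} (hc : c ≤ 1) (h : m ≤ ee c k) : rr c m ≤ k := by
  unfold ee at h; unfold rr; omega

/-- The phase offset determined by the initial state. -/
def cc (turn : S → Turn) (s : S) : ℕ := if turn s = Turn.prob then 1 else 0

lemma cc_le (turn : S → Turn) (s : S) : cc turn s ≤ 1 := by
  unfold cc; split_ifs <;> omega

/-- Possible successors in the derandomized game. -/
def Rel (turn : S → Turn) {n : ℕ} : S' S n → S' S n → Prop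
  | Sum.inl x, y => (turn x ≠ Turn.prob → ∃ z, turn z = Turn.prob ∧ y = Sum.inl z) ∧
      (turn x = Turn.prob → ∃ i, y = Sum.inr (x, i))
  | Sum.inr (x, _), y => turn x = Turn.prob → ∃ z, turn z ≠ Turn.prob ∧ y = Sum.inl z

/-- Plays following the structure of the game. -/
def Good (turn : S → Turn) {n : ℕ} (s : S) (ρ : ℕ → S' S n) : Prop :=
  ρ 0 = Sum.inl s ∧ ∀ m, Rel turn (ρ m) (ρ (m+1))

lemma Good.pattern {turn : S → Turn} {n : ℕ} {s : S} {ρ : ℕ → S' S n} (h : Good turn s ρ)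
    (m : ℕ) :
    ((m + cc turn s) % 3 = 0 → ∃ x, ρ m = Sum.inl x ∧ turn x ≠ Turn.prob) ∧
    ((m + cc turn s) % 3 = 1 → ∃ x, ρ m = Sum.inl x ∧ turn x = Turn.prob) ∧
    ((m + cc turn s) % 3 = 2 → ∃ x i, ρ m = Sum.inr (x, i) ∧ turn x = Turn.prob ∧
      ∃ m', m = m' + 1 ∧ ρ m' = Sum.inl x) := by
  induction m with
  | zero =>
    rw [h.1]
    unfold cc
    split_ifs with h1
    · simp [h1]
    · simp [h1]
  | succ m ih =>
    have hm := h.2 m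
    refine ⟨fun hp => ?_, fun hp => ?_, fun hp => ?_⟩
    · obtain ⟨x, i, h1, h2, -⟩ := ih.2.2 (by omega)
      rw [h1] at hm
      obtain ⟨z, hz, e⟩ := hm h2
      exact ⟨z, e, hz⟩
    · obtain ⟨x, h1, h2⟩ := ih.1 (by omega)
      rw [h1] at hm
      obtain ⟨z, hz, e⟩ := hm.1 h2
      exact ⟨z, e, hz⟩
    · obtain ⟨x, h1, h2⟩ := ih.2.1 (by omega)
      rw [h1] at hm
      obtain ⟨i, e⟩ := hm.2 h2
      exact ⟨x, i, e, h2, m, rfl, h1⟩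

lemma Good.even {turn : S → Turn} {n : ℕ} {s : S} {ρ : ℕ → S' S n} (h : Good turn s ρ)
    {k : ℕ} (hk : (k + cc turn s) % 2 = 0) :
    ρ (ee (cc turn s) k) = Sum.inl (EE (cc turn s) ρ k) ∧
      turn (EE (cc turn s) ρ k) ≠ Turn.prob := by
  obtain ⟨x, h1, h2⟩ := (h.pattern (ee (cc turn s) k)).1 (by unfold ee; omega)
  simp only [EE, h1, unbar]
  exact ⟨trivial, h2⟩

lemma Good.odd {turn : S → Turn} {n : ℕ} {s : S} {ρ : ℕ → S' S n} (h : Good turn s ρ)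
    {k : ℕ} (hk : (k + cc turn s) % 2 = 1) :
    ρ (ee (cc turn s) k) = Sum.inl (EE (cc turn s) ρ k) ∧
      turn (EE (cc turn s) ρ k) = Turn.prob ∧
      ∃ i, ρ (ee (cc turn s) k + 1) = Sum.inr (EE (cc turn s) ρ k, i) := by
  obtain ⟨x, h1, h2⟩ := (h.pattern (ee (cc turn s) k)).2.1 (by unfold ee; omega)
  have := h.2 (ee (cc turn s) k)
  rw [h1] at this
  have := this.2 h2
  simp only [EE, h1, unbar]
  exact ⟨trivial, h2, this⟩

lemma Good.inl {turn : S → Turn} {n : ℕ} {s : S} {ρ : ℕ → S' S n} (h : Good turn s ρ)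
    (k : ℕ) : ρ (ee (cc turn s) k) = Sum.inl (EE (cc turn s) ρ k) := by
  rcases Nat.mod_two_eq_zero_or_one (k + cc turn s) with hk | hk
  · exact (h.even hk).1
  · exact (h.odd hk).1

lemma Good.prob_iff {turn : S → Turn} {n : ℕ} {s : S} {ρ : ℕ → S' S n} (h : Good turn s ρ)
    (k : ℕ) : turn (EE (cc turn s) ρ k) = Turn.prob ↔ (k + cc turn s) % 2 = 1 := by
  rcases Nat.mod_two_eq_zero_or_one (k + cc turn s) with hk | hk
  · have := (h.even hk).2
    simp [this, hk]
  · have := (h.odd hk).2.1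
    simp [this, hk]

lemma Good.unbar_eq {turn : S → Turn} {n : ℕ} {s : S} {ρ : ℕ → S' S n} (h : Good turn s ρ)
    (m : ℕ) : unbar (ρ m) = EE (cc turn s) ρ (rr (cc turn s) m) := by
  have hc := cc_le turn s
  by_cases h2 : (m + cc turn s) % 3 = 2
  · obtain ⟨x, i, h3, h4, m', rfl, h5⟩ := (h.pattern m).2.2 h2
    have : ee (cc turn s) (rr (cc turn s) (m'+1)) = m' := by
      unfold ee rr; omega
    rw [EE, this, h3, h5]
    rfl
  · have : ee (cc turn s) (rr (cc turn s) m) = m := by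
      unfold ee rr; omega
    rw [EE, this]

lemma Good.phi_iff {turn : S → Turn} {n : ℕ} {s : S} {ρ : ℕ → S' S n} (h : Good turn s ρ)
    (φ : Set (ℕ → S)) : ρ ∈ phi' φ ↔ EE (cc turn s) ρ ∈ φ := by
  have hc := cc_le turn s
  have hl : ∀ k, (ρ (ee (cc turn s) k)).isLeft = true := by
    intro k; rw [h.inl]; rfl
  have hcount : ∀ k, Nat.count (fun m => (ρ m).isLeft = true) (ee (cc turn s) k) = k := by
    intro k
    induction k with
    | zero => rw [ee_zero hc]; simp
    | succ k ih =>
      rcases Nat.mod_two_eq_zero_or_one (k + cc turn s) with hk | hk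
      · rw [ee_succ0 hk, Nat.count_succ, ih, if_pos (hl k)]
      · rw [ee_succ1 hk, Nat.count_succ, Nat.count_succ, ih, if_pos (hl k)]
        obtain ⟨i, hi⟩ := (h.odd hk).2.2
        rw [hi]
        simp
  have hnth : ∀ k, Nat.nth (fun m => (ρ m).isLeft = true) k = ee (cc turn s) k := by
    intro k
    have := Nat.nth_count (p := fun m => (ρ m).isLeft = true) (hl k)
    rwa [hcount] at this
  have hinf : {m | (ρ m).isLeft = true}.Infinite := by
    have hinj : Function.Injective (ee (cc turn s)) :=
      (strictMono_nat_of_lt_succ (fun k => ee_lt (Nat.lt_succ_self k))).injective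
    apply (Set.infinite_range_of_injective hinj).mono
    rintro _ ⟨k, rfl⟩
    exact hl k
  unfold phi'
  simp only [Set.mem_ofPred_eq, hnth]
  exact ⟨fun hh => hh.2, fun hh => ⟨hinf, hh⟩⟩

instance discS' [MeasurableSpace S] [DiscreteMeasurableSpace S] [Finite S] (n : ℕ) [NeZero n] :
    DiscreteMeasurableSpace (S' S n) :=
  ⟨fun _ => measurableSet_sum_iff.2 ⟨MeasurableSet.of_discrete, MeasurableSet.of_discrete⟩⟩

lemma EE_measurable [MeasurableSpace S] [DiscreteMeasurableSpace S] [Finite S] (n : ℕ) [NeZero n]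
    (c : ℕ) : Measurable (EE (S := S) (n := n) c) := by
  apply measurable_pi_lambda
  intro k
  exact (Measurable.of_discrete (f := (unbar : S' S n → S))).comp (measurable_pi_apply _)

section game

variable [Fintype S] [DecidableEq S] [Fintype A₁] [Fintype A₂]
    [MeasurableSpace S] [DiscreteMeasurableSpace S]
    {n : ℕ} [NeZero n]
    {turn : S → Turn} {δ₁ : S → A₁ → S} {δ₂ : S → A₂ → S} {succ : S → ZMod n → S}
    {f : A₁ → ZMod n} {g : A₂ → ZMod n}

lemma step_p1 (σ : List (S' S n) → PMF A₁) (π : List (S' S n) → PMF A₂)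
    (u : List (S' S n)) (x t : S) (hx : turn x = Turn.p1) :
    stepG' n turn δ₁ δ₂ succ f g σ π u (Sum.inl x) (Sum.inl t) =
      ∑' a, σ (u ++ [Sum.inl x]) a * (if δ₁ x a = t then 1 else 0) := by
  simp [stepG', turn', hx, delta₁']

lemma step_p2 (σ : List (S' S n) → PMF A₁) (π : List (S' S n) → PMF A₂)
    (u : List (S' S n)) (x t : S) (hx : turn x = Turn.p2) :
    stepG' n turn δ₁ δ₂ succ f g σ π u (Sum.inl x) (Sum.inl t) =
      ∑' b, π (u ++ [Sum.inl x]) b * (if δ₂ x b = t then 1 else 0) := by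
  simp [stepG', turn', hx, delta₂']

lemma step_prob (σ : List (S' S n) → PMF A₁) (π : List (S' S n) → PMF A₂)
    (u : List (S' S n)) (x : S) (i : ZMod n) (hx : turn x = Turn.prob) :
    stepG' n turn δ₁ δ₂ succ f g σ π u (Sum.inl x) (Sum.inr (x, i)) =
      ∑' b, π (u ++ [Sum.inl x]) b * (if g b = i then 1 else 0) := by
  simp [stepG', turn', hx, delta₂']

lemma step_inr (σ : List (S' S n) → PMF A₁) (π : List (S' S n) → PMF A₂)
    (u : List (S' S n)) (x t : S) (i : ZMod n) :
    stepG' n turn δ₁ δ₂ succ f g σ π u (Sum.inr (x, i)) (Sum.inl t) =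
      ∑' a, σ (u ++ [Sum.inr (x, i)]) a * (if succ x (i + f a) = t then 1 else 0) := by
  simp [stepG', turn', delta₁']

lemma step_rel
    (hδ₁ : ∀ s a, turn s = Turn.p1 → turn (δ₁ s a) = Turn.prob)
    (hδ₂ : ∀ s b, turn s = Turn.p2 → turn (δ₂ s b) = Turn.prob)
    (hsucc : ∀ s k, turn s = Turn.prob → turn (succ s k) ≠ Turn.prob)
    (σ : List (S' S n) → PMF A₁) (π : List (S' S n) → PMF A₂)
    (u : List (S' S n)) (x y : S' S n)
    (h : stepG' n turn δ₁ δ₂ succ f g σ π u x y ≠ 0) : Rel turn x y := by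
  rcases x with x | ⟨x, i⟩
  · cases hx : turn x with
    | p1 =>
      simp only [stepG', turn', hx, delta₁', ne_eq, ENNReal.tsum_eq_zero, not_forall] at h
      obtain ⟨a, ha⟩ := h
      have : Sum.inl (δ₁ x a) = y := by by_contra hne; simp [hne] at ha
      exact ⟨fun _ => ⟨_, hδ₁ x a hx, this.symm⟩, fun h' => by simp [hx] at h'⟩
    | p2 =>
      simp only [stepG', turn', hx, delta₂', ne_eq, ENNReal.tsum_eq_zero, not_forall] at h
      obtain ⟨a, ha⟩ := h
      have : Sum.inl (δ₂ x a) = y := by by_contra hne; simp [hne] at ha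
      exact ⟨fun _ => ⟨_, hδ₂ x a hx, this.symm⟩, fun h' => by simp [hx] at h'⟩
    | prob =>
      simp only [stepG', turn', hx, delta₂', ne_eq, ENNReal.tsum_eq_zero, not_forall] at h
      obtain ⟨a, ha⟩ := h
      have : Sum.inr (x, g a) = y := by by_contra hne; simp [hne] at ha
      exact ⟨fun h' => absurd hx h', fun _ => ⟨_, this.symm⟩⟩
  · simp only [stepG', turn', delta₁', ne_eq, ENNReal.tsum_eq_zero, not_forall] at h
    obtain ⟨a, ha⟩ := h
    have : Sum.inl (succ x (i + f a)) = y := by by_contra hne; simp [hne] at ha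
    exact fun hx => ⟨_, hsucc x _ hx, this.symm⟩

lemma ae_good
    (hδ₁ : ∀ s a, turn s = Turn.p1 → turn (δ₁ s a) = Turn.prob)
    (hδ₂ : ∀ s b, turn s = Turn.p2 → turn (δ₂ s b) = Turn.prob)
    (hsucc : ∀ s k, turn s = Turn.prob → turn (succ s k) ≠ Turn.prob)
    {σ : List (S' S n) → PMF A₁} {π : List (S' S n) → PMF A₂} {s : S}
    {P : Measure (ℕ → S' S n)}
    (hP : IsPM (stepG' n turn δ₁ δ₂ succ f g σ π) (Sum.inl s) P) :
    ∀ᵐ ρ ∂P, Good turn s ρ := by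
  classical
  have h1 : ∀ (m : ℕ) (x y : S' S n), ∀ᵐ ρ ∂P, ρ m = x → ρ (m+1) = y → Rel turn x y := by
    intro m x y
    by_cases hxy : Rel turn x y
    · exact Filter.Eventually.of_forall (fun _ _ _ => hxy)
    have hs : ∀ u, stepG' n turn δ₁ δ₂ succ f g σ π u x y = 0 := by
      intro u
      by_contra h
      exact hxy (step_rel hδ₁ hδ₂ hsucc σ π u x y h)
    have hk := hP.markov m (fun _ z => if z = x then 1 else 0) y
    have h0 : ∀ ρ : ℕ → S' S n, (if ρ m = x then (1 : ℝ≥0∞) else 0) *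
        stepG' n turn δ₁ δ₂ succ f g σ π (hst m ρ) (ρ m) y = 0 := by
      intro ρ
      split_ifs with h
      · rw [h, hs, mul_zero]
      · rw [zero_mul]
    simp only [h0, lintegral_zero] at hk
    rw [lintegral_eq_zero_iff] at hk
    · filter_upwards [hk] with ρ hρ h2 h3
      simp [h2, h3] at hρ
    · apply meas_dep (m+1)
      intro ρ ρ' h
      rw [h m (by omega), h (m+1) (by omega)]
  have h2 : ∀ᵐ ρ ∂P, ∀ (m : ℕ) (x y : S' S n), ρ m = x → ρ (m+1) = y → Rel turn x y := by
    rw [ae_all_iff]; intro m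
    rw [ae_all_iff]; intro x
    rw [ae_all_iff]; intro y
    exact h1 m x y
  filter_upwards [hP.zero, h2] with ρ h3 h4
  exact ⟨h3, fun m => h4 m _ _ rfl rfl⟩

/-- Position based deletion on lists. -/
def sub {α : Type} (c k : ℕ) (d : α) (u : List α) : List α :=
  (List.range k).map (fun j => u.getD (ee c j) d)

lemma sub_map {α β : Type} (c k : ℕ) (d : α) (u : List α) (F : α → β) :
    (sub c k d u).map F = sub c k (F d) (u.map F) := by
  unfold sub
  rw [List.map_map]
  apply List.map_congr_left
  intro j _
  simp

lemma hst_EE (c k m : ℕ) (s : S) (ρ : ℕ → S' S n) (hm : ∀ j < k, ee c j < m) :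
    hst k (EE c ρ) = sub c k s ((hst m ρ).map unbar) := by
  have hs : s = unbar (n := n) (Sum.inl s) := rfl
  unfold sub
  rw [hst]
  apply List.map_congr_left
  intro j hj
  conv_rhs => rw [hs, List.getD_map]
  rw [hst_getD _ _ (hm j (List.mem_range.1 hj))]
  rfl

lemma main_push
    (hδ₁ : ∀ s a, turn s = Turn.p1 → turn (δ₁ s a) = Turn.prob)
    (hδ₂ : ∀ s b, turn s = Turn.p2 → turn (δ₂ s b) = Turn.prob)
    (hsucc : ∀ s k, turn s = Turn.prob → turn (succ s k) ≠ Turn.prob)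
    {σ' : List (S' S n) → PMF A₁} {π' : List (S' S n) → PMF A₂} {s : S}
    {σ : List S → PMF A₁} {π : List S → PMF A₂}
    {P : Measure (ℕ → S' S n)}
    (hP : IsPM (stepG' n turn δ₁ δ₂ succ f g σ' π') (Sum.inl s) P)
    (H1 : ∀ ρ : ℕ → S' S n, Good turn s ρ → ∀ k, turn (EE (cc turn s) ρ k) = Turn.p1 →
      σ' (hst (ee (cc turn s) k + 1) ρ) = σ (hst (k+1) (EE (cc turn s) ρ)))
    (H2 : ∀ ρ : ℕ → S' S n, Good turn s ρ → ∀ k x, x = EE (cc turn s) ρ k →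
      turn x = Turn.prob → ∀ t,
      ∑ i : ZMod n, stepG' n turn δ₁ δ₂ succ f g σ' π' (hst (ee (cc turn s) k) ρ)
          (Sum.inl x) (Sum.inr (x, i)) *
        stepG' n turn δ₁ δ₂ succ f g σ' π' (hst (ee (cc turn s) k) ρ ++ [Sum.inl x])
          (Sum.inr (x, i)) (Sum.inl t) =
        ((Finset.univ.filter fun k : ZMod n => succ x k = t).card : ℝ≥0∞) / (n : ℝ≥0∞))
    (H3 : ∀ k h x t, turn x = Turn.p2 →
      ∫⁻ ρ in {ρ | hst k (EE (cc turn s) ρ) = h ∧ EE (cc turn s) ρ k = x},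
        ∑' b, π' (hst (ee (cc turn s) k + 1) ρ) b * (if δ₂ x b = t then 1 else 0) ∂P =
      P {ρ | hst k (EE (cc turn s) ρ) = h ∧ EE (cc turn s) ρ k = x} *
        ∑' b, π (h ++ [x]) b * (if δ₂ x b = t then 1 else 0)) :
    IsPM (stepG n turn δ₁ δ₂ succ σ π) s (P.map (EE (cc turn s))) := by
  classical
  have hc := cc_le turn s
  have hgood := ae_good hδ₁ hδ₂ hsucc hP
  have hEm := EE_measurable (S := S) n (cc turn s)
  have hprob := hP.1
  set c := cc turn s with hcdef
  apply IsPM.of_next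
  · exact Measure.isProbabilityMeasure_map hEm.aemeasurable
  · rw [ae_map_iff hEm.aemeasurable]
    · filter_upwards [hgood] with ρ hρ
      simp [EE, ee_zero hc, hρ.1, unbar]
    · apply measSet_dep 0
      intro ρ ρ' h
      rw [h 0 (by omega)]
  intro k h x t
  rw [Measure.map_apply hEm, Measure.map_apply hEm]
  rotate_left
  · apply measSet_dep k
    intro ρ ρ' hh
    rw [hst_congr (fun i hi => hh i (by omega)), hh k (by omega)]
  · apply measSet_dep (k+1)
    intro ρ ρ' hh
    rw [hst_congr (fun i hi => hh i (by omega)), hh k (by omega), hh (k+1) (by omega)]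
  set B : Set (ℕ → S' S n) := {ρ | hst k (EE c ρ) = h ∧ EE c ρ k = x} with hB
  have hBm : MeasurableSet B := by
    apply measSet_dep (ee c k)
    intro ρ ρ' hh
    have e1 : ∀ i < k + 1, EE c ρ i = EE c ρ' i := by
      intro i hi
      unfold EE
      rw [hh (ee c i) (by unfold ee; omega)]
    rw [hst_congr (fun i hi => e1 i (by omega)), e1 k (by omega)]
  have hpre : EE c ⁻¹' {ρ | hst k ρ = h ∧ ρ k = x} = B := rfl
  have hpre2 : P (EE c ⁻¹' {ρ | hst k ρ = h ∧ ρ k = x ∧ ρ (k+1) = t}) =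
      ∫⁻ ρ, B.indicator 1 ρ * (if ρ (ee c (k+1)) = Sum.inl t then 1 else 0) ∂P := by
    have hm : MeasurableSet {ρ : ℕ → S' S n | ρ (ee c (k+1)) = Sum.inl t} := by
      apply measSet_dep (ee c (k+1))
      intro ρ ρ' hh
      rw [hh _ (by omega)]
    have e1 : (fun ρ : ℕ → S' S n => B.indicator (1 : (ℕ → S' S n) → ℝ≥0∞) ρ *
        (if ρ (ee c (k+1)) = Sum.inl t then 1 else 0)) =
        (B ∩ {ρ : ℕ → S' S n | ρ (ee c (k+1)) = Sum.inl t}).indicator 1 := by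
      funext ρ
      by_cases h1 : ρ ∈ B <;> by_cases h2 : ρ (ee c (k+1)) = Sum.inl t <;>
        simp [Set.indicator, h1, h2]
    rw [e1, lintegral_indicator_one (hBm.inter hm)]
    apply measure_congr
    filter_upwards [hgood] with ρ hρ
    apply propext
    show (hst k (EE c ρ) = h ∧ EE c ρ k = x ∧ EE c ρ (k+1) = t) ↔
      ((hst k (EE c ρ) = h ∧ EE c ρ k = x) ∧ ρ (ee c (k+1)) = Sum.inl t)
    rw [hρ.inl]
    simp [and_assoc, hcdef]
  rw [hpre, hpre2]
  let G : List (S' S n) → S' S n → ℝ≥0∞ := fun u z =>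
    if sub c k s (u.map unbar) = h ∧ z = Sum.inl x then 1 else 0
  have hG : ∀ᵐ ρ ∂P, B.indicator 1 ρ = G (hst (ee c k) ρ) (ρ (ee c k)) := by
    filter_upwards [hgood] with ρ hρ
    have := hst_EE c k (ee c k) s ρ (fun j hj => ee_lt hj)
    have e2 : ρ ∈ B ↔ (sub c k s ((hst (ee c k) ρ).map unbar) = h ∧
        ρ (ee c k) = Sum.inl x) := by
      rw [← this, hρ.inl]
      simp [hB, hcdef]
    by_cases h1 : ρ ∈ B
    · simp only [Set.indicator, h1, if_true, G, e2.1 h1, Pi.one_apply]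
      simp
    · have h2 := h1
      rw [e2] at h2
      simp only [Set.indicator, h1, if_false, G, h2]
  -- a convenient form of the final computation
  have hfin : ∀ (K : ℝ≥0∞) (Ψ : (ℕ → S' S n) → ℝ≥0∞),
      (∀ ρ, Good turn s ρ → ρ ∈ B → Ψ ρ = K) →
      ∫⁻ ρ, B.indicator 1 ρ * Ψ ρ ∂P = P B * K := by
    intro K Ψ hΨ
    have : ∫⁻ ρ, B.indicator 1 ρ * Ψ ρ ∂P = ∫⁻ ρ, B.indicator 1 ρ * K ∂P := by
      apply lintegral_congr_ae
      filter_upwards [hgood] with ρ hρ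
      by_cases h1 : ρ ∈ B
      · rw [hΨ ρ hρ h1]
      · simp [Set.indicator, h1]
    rw [this, lintegral_mul_const _ (measurable_one.indicator hBm), lintegral_indicator_one hBm]
  have hnull : (∀ ρ, Good turn s ρ → ρ ∉ B) → ∀ (K : ℝ≥0∞) (Ψ : (ℕ → S' S n) → ℝ≥0∞),
      ∫⁻ ρ, B.indicator 1 ρ * Ψ ρ ∂P = P B * K := by
    intro hh K Ψ
    exact hfin K Ψ (fun ρ hρ hb => absurd hb (hh ρ hρ))
  rcases Nat.mod_two_eq_zero_or_one (k + c) with hk | hk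
  · -- player state phase
    by_cases hx : turn x = Turn.prob
    · apply hnull
      intro ρ hρ hb
      have := (hρ.even hk).2
      rw [← hcdef, hb.2] at this
      exact this hx
    have hmk := hP.markov (ee c k) G (Sum.inl t)
    have e1 : ∫⁻ ρ, B.indicator 1 ρ * (if ρ (ee c (k+1)) = Sum.inl t then 1 else 0) ∂P =
        ∫⁻ ρ, B.indicator 1 ρ * stepG' n turn δ₁ δ₂ succ f g σ' π' (hst (ee c k) ρ)
          (ρ (ee c k)) (Sum.inl t) ∂P := by
      rw [ee_succ0 hk]
      refine Eq.trans ?_ (hmk.trans ?_)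
      · apply lintegral_congr_ae
        filter_upwards [hG] with ρ hρ
        rw [hρ]
      · apply lintegral_congr_ae
        filter_upwards [hG] with ρ hρ
        rw [hρ]
    rw [e1]
    cases hx' : turn x with
    | prob => exact absurd hx' hx
    | p1 =>
      apply hfin
      intro ρ hρ hb
      have h1 := hρ.inl k
      rw [← hcdef, hb.2] at h1
      have h3 : hst (k+1) (EE c ρ) = h ++ [x] := by rw [hst_succ, hb.1, hb.2]
      have h4 := H1 ρ hρ k (by rw [hb.2]; exact hx')
      rw [h3, hst_succ, h1] at h4
      rw [h1, step_p1 _ _ _ _ _ hx', h4]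
      simp [stepG, hx']
    | p2 =>
      have h5 := H3 k h x t hx'
      have e2 : stepG n turn δ₁ δ₂ succ σ π h x t =
          ∑' b, π (h ++ [x]) b * (if δ₂ x b = t then 1 else 0) := by
        simp [stepG, hx']
      rw [e2, ← h5, ← lintegral_indicator hBm]
      apply lintegral_congr_ae
      filter_upwards [hgood] with ρ hρ
      by_cases hb : ρ ∈ B
      · have h1 := hρ.inl k
        rw [← hcdef, hb.2] at h1
        rw [Set.indicator_of_mem hb, Set.indicator_of_mem hb, h1, step_p2 _ _ _ _ _ hx',
          hst_succ, h1]
        simp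
      · rw [Set.indicator_of_notMem hb, Set.indicator_of_notMem hb, zero_mul]
  · -- probabilistic phase
    by_cases hx : turn x = Turn.prob
    swap
    · apply hnull
      intro ρ hρ hb
      have := (hρ.odd hk).2.1
      rw [← hcdef, hb.2] at this
      exact hx this
    let st := stepG' n turn δ₁ δ₂ succ f g σ' π'
    have e1 : ∫⁻ ρ, B.indicator 1 ρ * (if ρ (ee c (k+1)) = Sum.inl t then 1 else 0) ∂P =
        ∫⁻ ρ, ∑ i : ZMod n, (B.indicator 1 ρ *
          (if ρ (ee c k + 1) = Sum.inr (x, i) then 1 else 0) *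
          (if ρ (ee c k + 1 + 1) = Sum.inl t then 1 else 0)) ∂P := by
      apply lintegral_congr_ae
      filter_upwards [hgood] with ρ hρ
      rw [ee_succ1 hk]
      by_cases hb : ρ ∈ B
      · obtain ⟨i, hi⟩ := (hρ.odd hk).2.2
        rw [← hcdef, hb.2] at hi
        rw [hi]
        simp [hb]
      · simp [Set.indicator, hb]
    have hmeas1 : ∀ i : ZMod n, Measurable (fun ρ : ℕ → S' S n => B.indicator
        (1 : (ℕ → S' S n) → ℝ≥0∞) ρ *
          (if ρ (ee c k + 1) = Sum.inr (x, i) then 1 else 0) *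
          (if ρ (ee c k + 1 + 1) = Sum.inl t then 1 else 0)) := by
      intro i
      refine Measurable.mul (Measurable.mul (measurable_one.indicator hBm) ?_) ?_
      · apply meas_dep (ee c k + 1)
        intro ρ ρ' hh
        rw [hh _ (by omega)]
      · apply meas_dep (ee c k + 1 + 1)
        intro ρ ρ' hh
        rw [hh _ (by omega)]
    have e2 : ∀ i : ZMod n, ∫⁻ ρ, (B.indicator 1 ρ *
          (if ρ (ee c k + 1) = Sum.inr (x, i) then 1 else 0) *
          (if ρ (ee c k + 1 + 1) = Sum.inl t then 1 else 0)) ∂P =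
        ∫⁻ ρ, B.indicator 1 ρ * (st (hst (ee c k) ρ) (ρ (ee c k)) (Sum.inr (x, i)) *
          st (hst (ee c k) ρ ++ [ρ (ee c k)]) (Sum.inr (x, i)) (Sum.inl t)) ∂P := by
      intro i
      let G1 : List (S' S n) → S' S n → ℝ≥0∞ := fun w z =>
        G w.dropLast (w.getLastD (Sum.inl s)) * (if z = Sum.inr (x, i) then 1 else 0)
      let G2 : List (S' S n) → S' S n → ℝ≥0∞ := fun u z =>
        G u z * st (u ++ [z]) (Sum.inr (x, i)) (Sum.inl t)
      have m1 := hP.markov (ee c k + 1) G1 (Sum.inl t)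
      have m2 := hP.markov (ee c k) G2 (Sum.inr (x, i))
      have hG1 : ∀ ρ : ℕ → S' S n, G1 (hst (ee c k + 1) ρ) (ρ (ee c k + 1)) =
          G (hst (ee c k) ρ) (ρ (ee c k)) *
            (if ρ (ee c k + 1) = Sum.inr (x, i) then 1 else 0) := by
        intro ρ
        simp [G1, hst_succ]
      refine Eq.trans ?_ (m1.trans (Eq.trans ?_ (m2.trans ?_)))
      · apply lintegral_congr_ae
        filter_upwards [hG] with ρ hρ
        rw [hρ, hG1]
      · apply lintegral_congr
        intro ρ
        rw [hG1]
        simp only [G2]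
        split_ifs with hi
        · rw [hi, hst_succ]; simp [st]
        · simp
      · apply lintegral_congr_ae
        filter_upwards [hG] with ρ hρ
        rw [hρ]
        simp only [G2, st]
        ring
    have hmeas2 : ∀ i : ZMod n, Measurable (fun ρ : ℕ → S' S n => B.indicator
        (1 : (ℕ → S' S n) → ℝ≥0∞) ρ *
          (st (hst (ee c k) ρ) (ρ (ee c k)) (Sum.inr (x, i)) *
          st (hst (ee c k) ρ ++ [ρ (ee c k)]) (Sum.inr (x, i)) (Sum.inl t))) := by
      intro i
      refine Measurable.mul (measurable_one.indicator hBm) ?_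
      apply meas_dep (ee c k)
      intro ρ ρ' hh
      rw [hh _ (by omega), hst_congr (fun j hj => hh j (by omega))]
    rw [e1, lintegral_finsetSum _ (fun i _ => hmeas1 i)]
    simp only [e2]
    rw [← lintegral_finsetSum _ (fun i _ => hmeas2 i)]
    simp only [← Finset.mul_sum]
    apply hfin
    intro ρ hρ hb
    have h1 := hρ.inl k
    rw [← hcdef, hb.2] at h1
    rw [h1]
    have := H2 ρ hρ k x hb.2.symm hx t
    simp only [st]
    rw [this]
    simp [stepG, hx]

lemma phi_measure
    (hδ₁ : ∀ s a, turn s = Turn.p1 → turn (δ₁ s a) = Turn.prob)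
    (hδ₂ : ∀ s b, turn s = Turn.p2 → turn (δ₂ s b) = Turn.prob)
    (hsucc : ∀ s k, turn s = Turn.prob → turn (succ s k) ≠ Turn.prob)
    {σ : List (S' S n) → PMF A₁} {π : List (S' S n) → PMF A₂} {s : S}
    {P : Measure (ℕ → S' S n)}
    (hP : IsPM (stepG' n turn δ₁ δ₂ succ f g σ π) (Sum.inl s) P)
    (φ : Set (ℕ → S)) (hφ : MeasurableSet φ) :
    P (phi' φ) = P.map (EE (cc turn s)) φ := by
  rw [Measure.map_apply (EE_measurable n _) hφ]
  apply measure_congr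
  filter_upwards [ae_good hδ₁ hδ₂ hsucc hP] with ρ hρ
  exact propext (hρ.phi_iff φ)

lemma count_sum (G : ZMod n → S) (t : S) (j : ZMod n) :
    ∑ i : ZMod n, (n : ℝ≥0∞)⁻¹ * (if G (i + j) = t then 1 else 0) =
      ((Finset.univ.filter fun k : ZMod n => G k = t).card : ℝ≥0∞) / (n : ℝ≥0∞) := by
  rw [Fintype.sum_equiv (Equiv.addRight j)
    (fun i => (n : ℝ≥0∞)⁻¹ * (if G (i + j) = t then 1 else 0))
    (fun k => (n : ℝ≥0∞)⁻¹ * (if G k = t then 1 else 0)) (fun i => rfl),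
    ← Finset.mul_sum, Finset.sum_boole, mul_comm, ENNReal.div_eq_inv_mul, mul_comm]

/-- The uniform distribution on `ZMod n`, pushed to the actions. -/
noncomputable def uf {A : Type} (f : A → ZMod n) (hf : Function.Surjective f) : PMF A :=
  (PMF.uniformOfFintype (ZMod n)).map (Function.surjInv hf)

lemma uf_sum {A : Type} (f : A → ZMod n) (hf : Function.Surjective f) (F : ZMod n → ℝ≥0∞) :
    ∑' a, uf f hf a * F (f a) = ∑ k, (n : ℝ≥0∞)⁻¹ * F k := by
  classical
  have : ∀ a, uf f hf a * F (f a) =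
      ∑' k : ZMod n, if a = Function.surjInv hf k then (n : ℝ≥0∞)⁻¹ * F k else 0 := by
    intro a
    rw [uf, PMF.map_apply, ← ENNReal.tsum_mul_right]
    congr 1
    funext k
    split_ifs with h
    · rw [h, Function.surjInv_eq hf]
      simp [ZMod.card]
    · simp
  simp only [this]
  rw [ENNReal.tsum_comm, tsum_fintype]
  congr 1
  funext k
  rw [tsum_ite_eq]

lemma avg_pmf [Nonempty A₂] (P : Measure (ℕ → S' S n)) [IsProbabilityMeasure P]
    (B : Set (ℕ → S' S n)) (m : ℕ) (π' : List (S' S n) → PMF A₂) :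
    ∃ p : PMF A₂, ∀ b, ∫⁻ ρ in B, π' (hst m ρ) b ∂P = P B * p b := by
  by_cases hB : P B = 0
  · refine ⟨PMF.pure (Classical.arbitrary A₂), ?_⟩
    intro b
    rw [hB, zero_mul, Measure.restrict_eq_zero.2 hB, lintegral_zero_measure]
  have hsum : ∑' b, ∫⁻ ρ in B, π' (hst m ρ) b ∂P = P B := by
    rw [← lintegral_tsum]
    · simp only [PMF.tsum_coe]
      simp
    · intro b
      apply Measurable.aemeasurable
      apply meas_dep m
      intro ρ ρ' h
      rw [hst_congr (fun i hi => h i (by omega))]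
  have hfin : P B ≠ ⊤ := measure_ne_top P B
  refine ⟨PMF.normalize (fun b => ∫⁻ ρ in B, π' (hst m ρ) b ∂P) (by rw [hsum]; exact hB)
    (by rw [hsum]; exact hfin), ?_⟩
  intro b
  rw [PMF.normalize_apply, hsum, mul_comm, mul_assoc, ENNReal.inv_mul_cancel hB hfin, mul_one]

/-- Player-1 strategy in the derandomized game simulating `σ`. -/
noncomputable def sig1 (c : ℕ) (s : S) (f : A₁ → ZMod n) (hf : Function.Surjective f)
    (σ : List S → PMF A₁) (h : List (S' S n)) : PMF A₁ :=
  if ee c (rr c (h.length - 1)) = h.length - 1 then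
    σ (sub c (rr c (h.length - 1) + 1) s (h.map unbar)) else uf f hf

/-- Player-1 strategy in the original game simulating `σ'`. -/
noncomputable def sig2 (c : ℕ) (s : S) (σ' : List (S' S n) → PMF A₁) (h : List S) : PMF A₁ :=
  σ' ((List.range (ee c (h.length - 1) + 1)).map (fun m => Sum.inl (h.getD (rr c m) s)))

/-- Player-2 strategy in the derandomized game simulating `π`. -/
noncomputable def pi2 (turn : S → Turn) (c : ℕ) (s : S) (g : A₂ → ZMod n)
    (hg : Function.Surjective g)
    (π : List S → PMF A₂) (h : List (S' S n)) : PMF A₂ :=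
  if turn (unbar (h.getLastD (Sum.inl s))) = Turn.p2 then
    π (sub c (rr c (h.length - 1) + 1) s (h.map unbar)) else uf g hg

lemma sig1_obs (c : ℕ) (s : S) (hf : Function.Surjective f) {obs₁ : S → O}
    (σ : List S → PMF A₁) (hσ : ObsBased obs₁ σ) :
    ObsBased (obs' obs₁) (sig1 (n := n) c s f hf σ) := by
  intro h h' hh
  have hl : h.length = h'.length := by simpa using congrArg List.length hh
  unfold sig1
  rw [hl]
  have : σ (sub c (rr c (h'.length - 1) + 1) s (h.map unbar)) =
      σ (sub c (rr c (h'.length - 1) + 1) s (h'.map unbar)) := by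
    apply hσ
    rw [sub_map, sub_map, List.map_map, List.map_map]
    have e : obs₁ ∘ unbar = (obs' obs₁ : S' S n → O) := rfl
    rw [e, hh]
  rw [this]

lemma sig2_obs (c : ℕ) (s : S) {obs₁ : S → O}
    (σ' : List (S' S n) → PMF A₁) (hσ : ObsBased (obs' obs₁) σ') :
    ObsBased obs₁ (sig2 c s σ') := by
  intro h h' hh
  have hl : h.length = h'.length := by simpa using congrArg List.length hh
  unfold sig2
  rw [hl]
  apply hσ
  rw [List.map_map, List.map_map]
  apply List.map_congr_left
  intro m _
  simp only [Function.comp, obs', unbar]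
  rw [← List.getD_map (f := obs₁), ← List.getD_map (f := obs₁), hh]

lemma forward [Nonempty A₂]
    (hδ₁ : ∀ s a, turn s = Turn.p1 → turn (δ₁ s a) = Turn.prob)
    (hδ₂ : ∀ s b, turn s = Turn.p2 → turn (δ₂ s b) = Turn.prob)
    (hsucc : ∀ s k, turn s = Turn.prob → turn (succ s k) ≠ Turn.prob)
    (hf : Function.Surjective f) {s : S}
    (σ : List S → PMF A₁) (π' : List (S' S n) → PMF A₂)
    (P : Measure (ℕ → S' S n))
    (hP : IsPM (stepG' n turn δ₁ δ₂ succ f g (sig1 (cc turn s) s f hf σ) π') (Sum.inl s) P) :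
    ∃ π, IsPM (stepG n turn δ₁ δ₂ succ σ π) s (P.map (EE (cc turn s))) := by
  have hc := cc_le turn s
  have := hP.1
  choose π hπ using fun h : List S => avg_pmf P
    {ρ | hst h.length (EE (cc turn s) ρ) = h} (ee (cc turn s) (h.length - 1) + 1) π'
  refine ⟨π, main_push hδ₁ hδ₂ hsucc hP ?_ ?_ ?_⟩
  · intro ρ hρ k hk
    unfold sig1
    rw [hst_length, Nat.add_sub_cancel, rr_ee hc, if_pos rfl,
      hst_EE (cc turn s) (k+1) (ee (cc turn s) k + 1) s ρ]
    intro j hj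
    rcases Nat.lt_succ_iff_lt_or_eq.1 hj with h | h
    · have := ee_lt (c := cc turn s) h; omega
    · subst h; omega
  · intro ρ hρ k x hx hxp t
    have hk := (hρ.prob_iff k).1 (hx ▸ hxp)
    have e1 : ∀ i, stepG' n turn δ₁ δ₂ succ f g (sig1 (cc turn s) s f hf σ) π'
        (hst (ee (cc turn s) k) ρ ++ [Sum.inl x]) (Sum.inr (x, i)) (Sum.inl t) =
        ((Finset.univ.filter fun k : ZMod n => succ x k = t).card : ℝ≥0∞) / (n : ℝ≥0∞) := by
      intro i
      rw [step_inr]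
      have e2 : sig1 (cc turn s) s f hf σ (hst (ee (cc turn s) k) ρ ++ [Sum.inl x] ++
          [Sum.inr (x, i)]) = uf f hf := by
        unfold sig1
        rw [if_neg]
        simp only [List.length_append, hst_length, List.length_cons, List.length_nil]
        unfold ee rr
        omega
      rw [e2, uf_sum f hf (fun j => if succ x (i + j) = t then 1 else 0), ← count_sum (succ x) t i]
      simp only [add_comm]
    simp only [e1]
    rw [← Finset.sum_mul]
    have e3 : ∑ i : ZMod n, stepG' n turn δ₁ δ₂ succ f g (sig1 (cc turn s) s f hf σ) π'
        (hst (ee (cc turn s) k) ρ) (Sum.inl x) (Sum.inr (x, i)) = 1 := by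
      simp only [step_prob _ _ _ _ _ hxp]
      rw [← tsum_fintype (L := .unconditional _), ENNReal.tsum_comm]
      simp only [ENNReal.tsum_mul_left]
      have e4 : ∀ b, ∑' i : ZMod n, (if g b = i then (1 : ℝ≥0∞) else 0) = 1 := by
        intro b; simp
      simp only [e4, mul_one, PMF.tsum_coe]
    rw [e3, one_mul]
  · intro k h x t hx
    have hBm : ∀ b, Measurable (fun ρ : ℕ → S' S n => π' (hst (ee (cc turn s) k + 1) ρ) b) := by
      intro b
      apply meas_dep (ee (cc turn s) k + 1)
      intro ρ ρ' h
      rw [hst_congr (fun i hi => h i (by omega))]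
    have eB : {ρ : ℕ → S' S n | hst (h ++ [x]).length (EE (cc turn s) ρ) = h ++ [x]} =
        {ρ | hst h.length (EE (cc turn s) ρ) = h ∧ EE (cc turn s) ρ h.length = x} := by
      ext ρ
      simp only [Set.mem_ofPred_eq, List.length_append, List.length_cons, List.length_nil,
        zero_add, hst_succ]
      constructor
      · intro h
        simpa using List.append_inj' h rfl
      · rintro ⟨h1, h2⟩; rw [h1, h2]
    by_cases hk : h.length = k
    swap
    · have : {ρ : ℕ → S' S n | hst k (EE (cc turn s) ρ) = h ∧ EE (cc turn s) ρ k = x} = ∅ := by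
        ext ρ
        simp only [Set.mem_ofPred_eq, Set.mem_empty_iff_false, iff_false]
        rintro ⟨h1, -⟩
        have := congrArg List.length h1
        rw [hst_length] at this
        exact hk this.symm
      rw [this]; simp
    subst hk
    have h2 := hπ (h ++ [x])
    rw [eB] at h2
    simp only [List.length_append, List.length_cons, List.length_nil, zero_add,
      Nat.add_sub_cancel] at h2
    rw [lintegral_tsum (fun b => ((hBm b).mul_const _).aemeasurable), ← ENNReal.tsum_mul_left]
    congr 1
    funext b
    rw [lintegral_mul_const _ (hBm b), h2 b, mul_assoc]

lemma backward
    (hδ₁ : ∀ s a, turn s = Turn.p1 → turn (δ₁ s a) = Turn.prob)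
    (hδ₂ : ∀ s b, turn s = Turn.p2 → turn (δ₂ s b) = Turn.prob)
    (hsucc : ∀ s k, turn s = Turn.prob → turn (succ s k) ≠ Turn.prob)
    (hg : Function.Surjective g) {s : S} {obs₁ : S → O}
    (σ' : List (S' S n) → PMF A₁) (hσ : ObsBased (obs' obs₁) σ') (π : List S → PMF A₂)
    (P : Measure (ℕ → S' S n))
    (hP : IsPM (stepG' n turn δ₁ δ₂ succ f g σ' (pi2 turn (cc turn s) s g hg π))
      (Sum.inl s) P) :
    IsPM (stepG n turn δ₁ δ₂ succ (sig2 (cc turn s) s σ') π) s (P.map (EE (cc turn s))) := by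
  have hc := cc_le turn s
  have := hP.1
  have hlt : ∀ k, ∀ j < k + 1, ee (cc turn s) j < ee (cc turn s) k + 1 := by
    intro k j hj
    rcases Nat.lt_succ_iff_lt_or_eq.1 hj with h | h
    · have := ee_lt (c := cc turn s) h; omega
    · subst h; omega
  refine main_push hδ₁ hδ₂ hsucc hP ?_ ?_ ?_
  · intro ρ hρ k hk
    unfold sig2
    rw [hst_length, Nat.add_sub_cancel]
    apply hσ
    rw [hst, List.map_map, List.map_map]
    apply List.map_congr_left
    intro m hm
    have hm' := List.mem_range.1 hm
    simp only [Function.comp, obs']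
    rw [hst_getD _ _ (Nat.lt_succ_of_le (rr_le hc (Nat.lt_succ_iff.1 hm'))), hρ.unbar_eq]
    rfl
  · intro ρ hρ k x hx hxp t
    have e1 : ∀ i, stepG' n turn δ₁ δ₂ succ f g σ' (pi2 turn (cc turn s) s g hg π)
        (hst (ee (cc turn s) k) ρ) (Sum.inl x) (Sum.inr (x, i)) = (n : ℝ≥0∞)⁻¹ := by
      intro i
      rw [step_prob _ _ _ _ _ hxp]
      have : pi2 turn (cc turn s) s g hg π (hst (ee (cc turn s) k) ρ ++ [Sum.inl x]) =
          uf g hg := by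
        unfold pi2
        rw [if_neg]
        simp [unbar, hxp]
      rw [this, uf_sum g hg (fun j => if j = i then 1 else 0)]
      simp
    have e2 : ∀ i : ZMod n, σ' (hst (ee (cc turn s) k) ρ ++ [Sum.inl x] ++ [Sum.inr (x, i)]) =
        σ' (hst (ee (cc turn s) k) ρ ++ [Sum.inl x] ++ [Sum.inr (x, 0)]) := by
      intro i
      apply hσ
      simp [obs', unbar]
    simp only [e1, step_inr, e2]
    rw [← tsum_fintype (L := .unconditional _)]
    simp only [← ENNReal.tsum_mul_left]
    rw [ENNReal.tsum_comm]
    have e3 : ∀ a, ∑' i : ZMod n, (n : ℝ≥0∞)⁻¹ *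
        (σ' (hst (ee (cc turn s) k) ρ ++ [Sum.inl x] ++ [Sum.inr (x, 0)]) a *
          (if succ x (i + f a) = t then 1 else 0)) =
        σ' (hst (ee (cc turn s) k) ρ ++ [Sum.inl x] ++ [Sum.inr (x, 0)]) a *
        (((Finset.univ.filter fun k : ZMod n => succ x k = t).card : ℝ≥0∞) / (n : ℝ≥0∞)) := by
      intro a
      rw [← count_sum (succ x) t (f a), tsum_fintype, Finset.mul_sum]
      congr 1
      funext i
      ring
    simp only [e3]
    rw [ENNReal.tsum_mul_right, PMF.tsum_coe, one_mul]
  · intro k h x t hx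
    have hBm : MeasurableSet {ρ : ℕ → S' S n | hst k (EE (cc turn s) ρ) = h ∧
        EE (cc turn s) ρ k = x} := by
      apply measSet_dep (ee (cc turn s) k)
      intro ρ ρ' hh
      have e1 : ∀ i < k + 1, EE (cc turn s) ρ i = EE (cc turn s) ρ' i := by
        intro i hi
        unfold EE
        rw [hh _ (hlt k i hi)]
      rw [hst_congr (fun i hi => e1 i (by omega)), e1 k (by omega)]
    have e1 : ∀ ρ ∈ {ρ : ℕ → S' S n | hst k (EE (cc turn s) ρ) = h ∧ EE (cc turn s) ρ k = x},
        ∑' b, pi2 turn (cc turn s) s g hg π (hst (ee (cc turn s) k + 1) ρ) b *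
          (if δ₂ x b = t then (1 : ℝ≥0∞) else 0) =
        ∑' b, π (h ++ [x]) b * (if δ₂ x b = t then 1 else 0) := by
      rintro ρ ⟨h1, h2⟩
      have : pi2 turn (cc turn s) s g hg π (hst (ee (cc turn s) k + 1) ρ) = π (h ++ [x]) := by
        unfold pi2
        rw [hst_length, Nat.add_sub_cancel, rr_ee hc, ← hst_EE _ _ _ _ _ (hlt k), hst_succ k,
          h1, h2, if_pos]
        rw [hst_succ, List.getLastD_concat]
        rw [EE] at h2
        rw [h2]; exact hx
      rw [this]
    rw [setLIntegral_congr_fun hBm e1, setLIntegral_const, mul_comm]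

end game

theorem stmt_6 {S A₁ A₂ O : Type} [Fintype S] [Nonempty S] [DecidableEq S]
    [Fintype A₁] [Nonempty A₁] [Fintype A₂] [Nonempty A₂] [Fintype O]
    [MeasurableSpace S] [DiscreteMeasurableSpace S]
    (n : ℕ) [NeZero n]
    (turn : S → Turn) (δ₁ : S → A₁ → S) (δ₂ : S → A₂ → S) (succ : S → ZMod n → S)
    (obs₁ : S → O)
    -- interaction separation: deterministic moves lead to probabilistic states and
    -- probabilistic states lead to player states
    (hδ₁ : ∀ s a, turn s = Turn.p1 → turn (δ₁ s a) = Turn.prob)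
    (hδ₂ : ∀ s b, turn s = Turn.p2 → turn (δ₂ s b) = Turn.prob)
    (hsucc : ∀ s k, turn s = Turn.prob → turn (succ s k) ≠ Turn.prob)
    (f : A₁ → ZMod n) (g : A₂ → ZMod n)
    (hf : Function.Surjective f) (hg : Function.Surjective g)
    (φ : Set (ℕ → S)) (hφ : MeasurableSet φ)
    (Pr : S → (List S → PMF A₁) → (List S → PMF A₂) → Measure (ℕ → S))
    (hPr : IsPlayMeasure (stepG n turn δ₁ δ₂ succ) Pr)
    (Pr' : S' S n → (List (S' S n) → PMF A₁) → (List (S' S n) → PMF A₂) →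
      Measure (ℕ → S' S n))
    (hPr' : IsPlayMeasure (stepG' n turn δ₁ δ₂ succ f g) Pr')
    (s : S) :
    ((∃ σ : List S → PMF A₁, ObsBased obs₁ σ ∧
        ∀ π : List S → PMF A₂, Pr s σ π φ = 1) ↔
      (∃ σ : List (S' S n) → PMF A₁, ObsBased (obs' obs₁) σ ∧
        ∀ π : List (S' S n) → PMF A₂, Pr' (Sum.inl s) σ π (phi' φ) = 1)) ∧
    ((∃ σ : List S → PMF A₁, ObsBased obs₁ σ ∧
        ∀ π : List S → PMF A₂, 0 < Pr s σ π φ) ↔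
      (∃ σ : List (S' S n) → PMF A₁, ObsBased (obs' obs₁) σ ∧
        ∀ π : List (S' S n) → PMF A₂, 0 < Pr' (Sum.inl s) σ π (phi' φ))) := by
  have hPM : ∀ s σ π, IsPM (stepG n turn δ₁ δ₂ succ σ π) s (Pr s σ π) :=
    fun s σ π => ⟨hPr.1 s σ π, hPr.2 s σ π⟩
  have hPM' : ∀ s σ π, IsPM (stepG' n turn δ₁ δ₂ succ f g σ π) s (Pr' s σ π) :=
    fun s σ π => ⟨hPr'.1 s σ π, hPr'.2 s σ π⟩
  have hfw : ∀ σ : List S → PMF A₁, ∀ π' : List (S' S n) → PMF A₂, ∃ π,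
      Pr' (Sum.inl s) (sig1 (cc turn s) s f hf σ) π' (phi' φ) = Pr s σ π φ := by
    intro σ π'
    have h1 := hPM' (Sum.inl s) (sig1 (cc turn s) s f hf σ) π'
    obtain ⟨π, hπ⟩ := forward hδ₁ hδ₂ hsucc hf σ π' _ h1
    exact ⟨π, by rw [phi_measure hδ₁ hδ₂ hsucc h1 φ hφ, hπ.unique (hPM s σ π)]⟩
  have hbw : ∀ σ' : List (S' S n) → PMF A₁, ObsBased (obs' obs₁) σ' →
      ∀ π : List S → PMF A₂, ∃ π',
      Pr s (sig2 (cc turn s) s σ') π φ = Pr' (Sum.inl s) σ' π' (phi' φ) := by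
    intro σ' hσ π
    have h1 := hPM' (Sum.inl s) σ' (pi2 turn (cc turn s) s g hg π)
    have h2 := backward hδ₁ hδ₂ hsucc hg σ' hσ π _ h1
    exact ⟨_, by rw [phi_measure hδ₁ hδ₂ hsucc h1 φ hφ, h2.unique (hPM s _ π)]⟩
  refine ⟨⟨?_, ?_⟩, ⟨?_, ?_⟩⟩
  · rintro ⟨σ, hσ, hw⟩
    refine ⟨sig1 (cc turn s) s f hf σ, sig1_obs _ _ hf σ hσ, fun π' => ?_⟩
    obtain ⟨π, hπ⟩ := hfw σ π'
    rw [hπ]; exact hw π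
  · rintro ⟨σ, hσ, hw⟩
    refine ⟨sig2 (cc turn s) s σ, sig2_obs _ _ σ hσ, fun π => ?_⟩
    obtain ⟨π', hπ⟩ := hbw σ hσ π
    rw [hπ]; exact hw π'
  · rintro ⟨σ, hσ, hw⟩
    refine ⟨sig1 (cc turn s) s f hf σ, sig1_obs _ _ hf σ hσ, fun π' => ?_⟩
    obtain ⟨π, hπ⟩ := hfw σ π'
    rw [hπ]; exact hw π
  · rintro ⟨σ, hσ, hw⟩
    refine ⟨sig2 (cc turn s) s σ, sig2_obs _ _ σ hσ, fun π => ?_⟩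
    obtain ⟨π', hπ⟩ := hbw σ hσ π
    rw [hπ]; exact hw π'

end Stmt6
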